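/- arXiv:2501.18849 — 2 statements merged into one kernel-verified Lean document; each statement's English description precedes it below -/
import Mathlib

section
/- Fix an integer n ≥ 1 and a real ε > 0, and define F : (0,∞) → ℂ by F(𝗊) = (1/(2π)) ∫_{−∞}^{∞} Γ(ε+is)^n · exp(−(ε+is)·log 𝗊) ds. Then the function 𝗊 ↦ F(𝗊) · √n · 𝗊^{(n−1)/(2n)} · e^{n·𝗊^{1/n}} · (2π)^{−(n−1)/2} − 1 is O(𝗊^{−1/n}) as 𝗊 → +∞; equivalently, F(𝗊) = ((2π)^{(n−1)/2}/(√n · 𝗊^{(n−1)/(2n)})) · e^{−n·𝗊^{1/n}} · (1 + O(𝗊^{−1/n})) as 𝗊 → +∞. -/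
open MeasureTheory Real Filter Asymptotics

/-! Write `x = log 𝗊` and let `Pₙ(x)` be the Mellin–Barnes integral (`mellinBarnes`). The proof is an
induction on `n` that only uses real Laplace integrals.

* `P₁(x) = exp(-eˣ)` by Mellin inversion (`mellinBarnes_one`), so the asymptotics are exact for
  `n = 1`.
* Inserting Euler's integral for one of the Gamma factors and applying Fubini gives
  `Pₙ₊₁(x) = ∫ exp(-eᵘ) Pₙ(x - u) du` (`mellinBarnes_succ`); the quadratic decay of `Γ` on vertical
  lines provides integrability.
* In the variable `w = x / n` the induction hypothesis is
  `Pₙ(nw) = Cₙ e^{-(n-1)w/2} exp(-n e^w) (1 + O(e^{-w}))` with `Cₙ = (2π)^{(n-1)/2} / √n`,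
  uniformly for *all* real `w`. Substituting it in the recursion with `u = w + n y` leaves integrals
  `∫ exp(a y - e^w φ(y)) dy` with the phase `φ(y) = e^{ny} + n e^{-y} - (n + 1)`, whose only critical
  point is the minimum `φ(0) = 0`, with `φ''(0) = n (n + 1)`. Laplace's method (`laplace`) evaluates
  them as `√(2π / (n (n + 1))) e^{-w/2} (1 + O(e^{-w}))` for `w ≥ 0`, which gives the claim for
  `n + 1` (`asymptotics_step`). For `w ≤ 0` the claim for `n + 1` is weaker than the bound
  `Pₙ(x) = O(e^{-x/2})` of `norm_mellinBarnes_le`.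

In Laplace's method the integrand is compared with a Gaussian times `1 + a y - M β y³`; the two odd
corrections integrate to zero, and the remainder is pointwise `O(1/M)` times a wider Gaussian because
`φ(y) ≥ y² / 2` on the whole line.
-/

namespace QuantumVolume

/-! ### Laplace's method for the phase `e^{Ny} + N e^{-y}` -/

/-- The phase `e^{Ny} + N e^{-y}` minus its value `N + 1` at `y = 0`, which is its minimum for
`N > 0`. -/
noncomputable def phase (N y : ℝ) : ℝ :=
  (exp (N * y) - 1 - N * y) + N * (exp (-y) - 1 + y)

/-- The global lower bound that controls the Laplace integrand away from the critical point. -/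
lemma half_sq_le_phase {N : ℝ} (hN : 1 ≤ N) (y : ℝ) : y ^ 2 / 2 ≤ phase N y := by
  unfold phase
  have h1 := add_one_le_exp (N * y)
  have h2 := add_one_le_exp (-y)
  rcases le_total 0 y with hy | hy
  · have h3 := quadratic_le_exp_of_nonneg (mul_nonneg (by linarith : 0 ≤ N) hy)
    have h4 : y ^ 2 ≤ (N * y) ^ 2 := by
      rw [mul_pow]; exact le_mul_of_one_le_left (sq_nonneg y) (one_le_pow₀ hN)
    nlinarith
  · have h3 := quadratic_le_exp_of_nonneg (neg_nonneg.2 hy)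
    nlinarith [sq_nonneg y]

lemma abs_exp_sub_taylor_two_le (x : ℝ) :
    |exp x - 1 - x - x ^ 2 / 2| ≤ |x| ^ 3 * exp |x| := by
  have h := Complex.norm_exp_sub_sum_le_norm_mul_exp (x : ℂ) 3
  simp only [Finset.sum_range_succ, Finset.sum_range_zero] at h
  rw [Complex.norm_real, norm_eq_abs] at h
  refine le_trans (le_of_eq ?_) h
  rw [← norm_eq_abs, ← Complex.norm_real]
  congr 1
  push_cast [Nat.factorial]
  ring

lemma abs_exp_sub_taylor_three_le (x : ℝ) :
    |exp x - 1 - x - x ^ 2 / 2 - x ^ 3 / 6| ≤ x ^ 4 * exp |x| := by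
  have h := Complex.norm_exp_sub_sum_le_norm_mul_exp (x : ℂ) 4
  simp only [Finset.sum_range_succ, Finset.sum_range_zero] at h
  rw [Complex.norm_real, norm_eq_abs, (by decide : Even 4).pow_abs] at h
  refine le_trans (le_of_eq ?_) h
  rw [← norm_eq_abs, ← Complex.norm_real]
  congr 1
  push_cast [Nat.factorial]
  ring

/-- A first-order Taylor bound which stays of polynomial size as `x → -∞`. -/
lemma abs_exp_sub_taylor_one_le (x : ℝ) : |exp x - 1 - x| ≤ x ^ 2 * (1 + exp x) := by
  have hx := add_one_le_exp x
  rw [abs_of_nonneg (by linarith)]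
  have he := exp_pos x
  rcases le_total 0 x with h0 | h0
  · have h := Complex.norm_exp_sub_sum_le_norm_mul_exp (x : ℂ) 2
    simp only [Finset.sum_range_succ, Finset.sum_range_zero] at h
    rw [Complex.norm_real, norm_eq_abs, abs_of_nonneg h0] at h
    have h2 : |exp x - 1 - x| ≤ x ^ 2 * exp x := by
      refine le_trans (le_of_eq ?_) h
      rw [← norm_eq_abs, ← Complex.norm_real]
      congr 1
      push_cast [Nat.factorial]
      ring
    have := le_abs_self (exp x - 1 - x)
    nlinarith [sq_nonneg x]
  · rcases le_total (-1) x with h1 | h1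
    · have h2 := abs_exp_sub_one_sub_id_le (abs_le.2 ⟨h1, by linarith⟩)
      have := le_abs_self (exp x - 1 - x)
      nlinarith [sq_nonneg x, mul_nonneg (sq_nonneg x) he.le]
    · have h2 : exp x ≤ 1 := exp_le_one_iff.2 h0
      nlinarith [sq_nonneg x, mul_nonneg (sq_nonneg x) he.le]

lemma abs_phase_sub_sq_le {N : ℝ} (hN : 1 ≤ N) (y : ℝ) :
    |phase N y - (N ^ 2 + N) * y ^ 2 / 2| ≤ (N ^ 3 + N) * |y| ^ 3 * exp (N * |y|) := by
  have h1 := abs_exp_sub_taylor_two_le (N * y)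
  have h2 := abs_exp_sub_taylor_two_le (-y)
  rw [abs_mul, abs_of_pos (by linarith : 0 < N)] at h1
  rw [abs_neg] at h2
  have h3 : exp |y| ≤ exp (N * |y|) := exp_le_exp.2 (by nlinarith [abs_nonneg y])
  have e : phase N y - (N ^ 2 + N) * y ^ 2 / 2 =
      (exp (N * y) - 1 - N * y - (N * y) ^ 2 / 2) +
        N * (exp (-y) - 1 - -y - (-y) ^ 2 / 2) := by
    unfold phase; ring
  rw [e]
  refine (abs_add_le _ _).trans ?_
  rw [abs_mul N, abs_of_pos (by linarith : 0 < N)]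
  have h4 : |y| ^ 3 * exp |y| ≤ |y| ^ 3 * exp (N * |y|) := by gcongr
  nlinarith

/-- The cubic Taylor term of the phase is made explicit because, being odd, it cancels in the Laplace
integral. -/
lemma abs_phase_sub_cube_le {N : ℝ} (hN : 1 ≤ N) (y : ℝ) :
    |phase N y - (N ^ 2 + N) * y ^ 2 / 2 - (N ^ 3 - N) / 6 * y ^ 3| ≤
      (N ^ 4 + N) * y ^ 4 * exp (N * |y|) := by
  have h1 := abs_exp_sub_taylor_three_le (N * y)
  have h2 := abs_exp_sub_taylor_three_le (-y)
  rw [abs_mul, abs_of_pos (by linarith : 0 < N)] at h1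
  rw [abs_neg] at h2
  have h3 : exp |y| ≤ exp (N * |y|) := exp_le_exp.2 (by nlinarith [abs_nonneg y])
  have e : phase N y - (N ^ 2 + N) * y ^ 2 / 2 - (N ^ 3 - N) / 6 * y ^ 3 =
      (exp (N * y) - 1 - N * y - (N * y) ^ 2 / 2 - (N * y) ^ 3 / 6) +
        N * (exp (-y) - 1 - -y - (-y) ^ 2 / 2 - (-y) ^ 3 / 6) := by
    unfold phase; ring
  rw [e]
  refine (abs_add_le _ _).trans ?_
  rw [abs_mul N, abs_of_pos (by linarith : 0 < N)]
  have h4 : y ^ 4 * exp |y| ≤ y ^ 4 * exp (N * |y|) := by gcongr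
  nlinarith

lemma pow_le_mul_exp_div_eight {t : ℝ} (ht : 0 ≤ t) (k : ℕ) :
    t ^ k ≤ 8 ^ k * k.factorial * exp (t / 8) := by
  have h := pow_div_factorial_le_exp (t / 8) (by positivity) k
  rw [div_le_iff₀ (by positivity), div_pow, div_le_iff₀ (by positivity)] at h
  linarith

set_option maxHeartbeats 1000000 in
/-- Uniform pointwise comparison of the Laplace integrand with its Gaussian approximation,
including the odd first-order corrections, which do not contribute to the integral. -/
lemma laplace_pointwise {N : ℝ} (hN : 1 ≤ N) (a : ℝ) :
    ∃ C : ℝ, 0 ≤ C ∧ ∀ M : ℝ, 1 ≤ M → ∀ y : ℝ,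
      |exp (a * y - M * phase N y) - exp (-(M * (N ^ 2 + N) / 2) * y ^ 2) *
        (1 + a * y - M * ((N ^ 3 - N) / 6) * y ^ 3)| ≤ C / M * exp (-(M / 8) * y ^ 2) := by
  set L := |a| + 2 * N with hL
  set A := N ^ 3 + N with hA
  set A' := N ^ 4 + N with hA'
  have hA0 : 0 ≤ A := by positivity
  have hA0' : 0 ≤ A' := by positivity
  refine ⟨exp (L ^ 2) * (4 * a ^ 2 * 8 + 4 * A ^ 2 * (8 ^ 3 * 6) + A' * (8 ^ 2 * 2)),
    by positivity, fun M hM y => ?_⟩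
  have hM0 : 0 < M := by linarith
  set r := phase N y - (N ^ 2 + N) * y ^ 2 / 2 with hr
  have hr1 := abs_phase_sub_sq_le hN y
  have hr2 := abs_phase_sub_cube_le hN y
  rw [← hr] at hr1 hr2
  set x := a * y - M * r with hx
  have hψ := half_sq_le_phase hN y
  set G := exp (-(M * (N ^ 2 + N) / 2) * y ^ 2) with hG
  have hGpos : 0 < G := exp_pos _
  have hexp : exp (a * y - M * phase N y) = G * exp x := by
    rw [hG, ← exp_add, hx, hr]; congr 1; ring
  have hG1 : G ≤ exp (-(M * y ^ 2) / 2) := by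
    rw [hG]; apply exp_le_exp.2
    have : 1 ≤ N ^ 2 + N := by nlinarith
    nlinarith [mul_nonneg (mul_nonneg hM0.le (sq_nonneg y)) (by linarith : 0 ≤ N ^ 2 + N - 1)]
  have hG2 : G * exp x ≤ exp (|a| * |y|) * exp (-(M * y ^ 2) / 2) := by
    rw [← hexp, ← exp_add]; apply exp_le_exp.2
    have : a * y ≤ |a| * |y| := by rw [← abs_mul]; exact le_abs_self _
    nlinarith
  set g := exp (-(M * y ^ 2) / 2) with hg
  have hg0 : 0 < g := exp_pos _
  have hE1 : 1 ≤ exp (|a| * |y|) := one_le_exp (by positivity)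
  have hE2 : 1 ≤ exp (N * |y|) := one_le_exp (by positivity)
  set E1 := exp (|a| * |y|) with hE1'
  set E2 := exp (N * |y|) with hE2'
  have hEL : E1 * E2 ^ 2 = exp (L * |y|) := by
    rw [hE1', hE2', ← exp_nat_mul, ← exp_add]; congr 1; push_cast; rw [hL]; ring
  -- for `M ≥ 1` the linear exponential is absorbed by a quarter of the Gaussian exponent
  have hLe : exp (L * |y|) ≤ exp (L ^ 2) * exp (M * y ^ 2 / 4) := by
    rw [← exp_add]; apply exp_le_exp.2
    have := sq_abs y
    nlinarith [sq_nonneg (L - |y| / 2), sq_nonneg y]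
  have key : |G * exp x - G * (1 + a * y - M * ((N ^ 3 - N) / 6) * y ^ 3)| ≤
      G * (x ^ 2 * (1 + exp x)) + G * (M * (A' * y ^ 4 * E2)) := by
    have e : G * exp x - G * (1 + a * y - M * ((N ^ 3 - N) / 6) * y ^ 3) =
        G * (exp x - 1 - x) + G * (-(M * (r - (N ^ 3 - N) / 6 * y ^ 3))) := by
      rw [hx]; ring
    rw [e]
    refine (abs_add_le _ _).trans ?_
    rw [abs_mul, abs_mul G, abs_neg, abs_mul M, abs_of_pos hGpos, abs_of_pos hM0]
    gcongr
    exact abs_exp_sub_taylor_one_le x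
  have hx2 : x ^ 2 ≤ (2 * a ^ 2 * y ^ 2 + 2 * M ^ 2 * A ^ 2 * y ^ 6) * E2 ^ 2 := by
    have h1 : x ^ 2 ≤ 2 * a ^ 2 * y ^ 2 + 2 * M ^ 2 * r ^ 2 := by
      rw [hx]; nlinarith [sq_nonneg (a * y + M * r)]
    have h2 : r ^ 2 ≤ A ^ 2 * y ^ 6 * E2 ^ 2 := by
      have := pow_le_pow_left₀ (abs_nonneg r) hr1 2
      rw [sq_abs, mul_pow, mul_pow, ← pow_mul, (by decide : Even (3 * 2)).pow_abs] at this
      exact this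
    have h3 : 2 * a ^ 2 * y ^ 2 ≤ 2 * a ^ 2 * y ^ 2 * E2 ^ 2 :=
      le_mul_of_one_le_right (by positivity) (one_le_pow₀ hE2)
    have h4 : 2 * M ^ 2 * r ^ 2 ≤ 2 * M ^ 2 * (A ^ 2 * y ^ 6 * E2 ^ 2) := by gcongr
    linarith
  have hfac : G * (1 + exp x) ≤ 2 * E1 * g := by
    have : g ≤ E1 * g := le_mul_of_one_le_left hg0.le hE1
    linarith
  set t := M * y ^ 2 with ht
  have ht0 : 0 ≤ t := by positivity
  have p1 := pow_le_mul_exp_div_eight ht0 1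
  have p2 := pow_le_mul_exp_div_eight ht0 2
  have p3 := pow_le_mul_exp_div_eight ht0 3
  norm_num [Nat.factorial] at p1 p2 p3
  have hpoly : 4 * a ^ 2 * t + 4 * A ^ 2 * t ^ 3 + A' * t ^ 2 ≤
      (4 * a ^ 2 * 8 + 4 * A ^ 2 * (8 ^ 3 * 6) + A' * (8 ^ 2 * 2)) * exp (t / 8) := by
    have q1 : 4 * a ^ 2 * t ≤ 4 * a ^ 2 * (8 * exp (t / 8)) := by gcongr
    have q2 : A' * t ^ 2 ≤ A' * (128 * exp (t / 8)) := by gcongr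
    have q3 : 4 * A ^ 2 * t ^ 3 ≤ 4 * A ^ 2 * (3072 * exp (t / 8)) := by gcongr
    linarith
  rw [hexp]
  calc |G * exp x - G * (1 + a * y - M * ((N ^ 3 - N) / 6) * y ^ 3)|
      ≤ G * (x ^ 2 * (1 + exp x)) + G * (M * (A' * y ^ 4 * E2)) := key
    _ = x ^ 2 * (G * (1 + exp x)) + M * A' * y ^ 4 * (E2 * G) := by ring
    _ ≤ ((2 * a ^ 2 * y ^ 2 + 2 * M ^ 2 * A ^ 2 * y ^ 6) * E2 ^ 2) * (2 * E1 * g) +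
          M * A' * y ^ 4 * ((E1 * E2 ^ 2) * g) := by
        have h5 : E2 ≤ E1 * E2 ^ 2 := by
          exact (le_self_pow₀ hE2 two_ne_zero).trans
            (le_mul_of_one_le_left (sq_nonneg E2) hE1)
        gcongr
    _ = 1 / M * (4 * a ^ 2 * t + 4 * A ^ 2 * t ^ 3 + A' * t ^ 2) * g * (E1 * E2 ^ 2) := by
        rw [ht]; field_simp; ring
    _ ≤ 1 / M * ((4 * a ^ 2 * 8 + 4 * A ^ 2 * (8 ^ 3 * 6) + A' * (8 ^ 2 * 2)) * exp (t / 8))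
          * g * (exp (L ^ 2) * exp (t / 4)) := by
        rw [hEL]; gcongr
    _ = _ := by
        have : exp (-(M / 8) * y ^ 2) = exp (t / 8) * g * exp (t / 4) := by
          rw [hg, ← exp_add, ← exp_add, ht]; congr 1; ring
        rw [this]; ring

lemma integral_eq_zero_of_odd {f : ℝ → ℝ} (hf : ∀ y, f (-y) = -f y) : ∫ y, f y = 0 := by
  have h := integral_neg_eq_self f volume
  simp only [hf, integral_neg] at h
  linarith

lemma integrable_pow_mul_gaussian {b : ℝ} (hb : 0 < b) (k : ℕ) :
    Integrable fun y : ℝ => y ^ k * exp (-b * y ^ 2) := by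
  have h := integrable_rpow_mul_exp_neg_mul_sq hb (s := k) (by
    have : (0 : ℝ) ≤ k := k.cast_nonneg
    linarith)
  simpa only [rpow_natCast] using h

/-- Laplace's method with relative error `O(e^{-w})`, the large parameter being `M = e^w`. -/
lemma laplace {N : ℝ} (hN : 1 ≤ N) (a : ℝ) :
    ∃ K : ℝ, 0 ≤ K ∧ ∀ w : ℝ, 0 ≤ w →
      Integrable (fun y : ℝ => exp (a * y - exp w * phase N y)) ∧
      |(∫ y : ℝ, exp (a * y - exp w * phase N y)) - √(2 * π / (N ^ 2 + N)) * exp (-w / 2)| ≤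
        K * exp (-w / 2) * exp (-w) := by
  obtain ⟨C, hC0, hC⟩ := laplace_pointwise hN a
  refine ⟨C * √(8 * π), by positivity, fun w hw => ?_⟩
  have hM1 : 1 ≤ exp w := one_le_exp hw
  have hM : 0 < exp w := exp_pos w
  have hκ : 0 < N ^ 2 + N := by positivity
  have hb : 0 < exp w * (N ^ 2 + N) / 2 := by positivity
  have hhalf : exp (-w / 2) = √(1 / exp w) := by
    rw [exp_half, exp_neg, one_div]
  have i0 := integrable_pow_mul_gaussian hb 0
  have i1 := integrable_pow_mul_gaussian hb 1
  have i3 := integrable_pow_mul_gaussian hb 3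
  simp only [pow_zero, one_mul, pow_one] at i0 i1
  set b := exp w * (N ^ 2 + N) / 2 with hbdef
  set P : ℝ → ℝ := fun y => exp (-b * y ^ 2) *
    (1 + a * y - exp w * ((N ^ 3 - N) / 6) * y ^ 3) with hP
  have hPe : P = fun y => exp (-b * y ^ 2) + (a * (y * exp (-b * y ^ 2)) -
      exp w * ((N ^ 3 - N) / 6) * (y ^ 3 * exp (-b * y ^ 2))) := by
    funext y; rw [hP]; ring
  have io : Integrable fun y : ℝ => a * (y * exp (-b * y ^ 2)) -
      exp w * ((N ^ 3 - N) / 6) * (y ^ 3 * exp (-b * y ^ 2)) :=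
    (i1.const_mul _).sub (i3.const_mul _)
  have iP : Integrable P := by rw [hPe]; exact i0.add io
  have hPint : ∫ y, P y = √(2 * π / (N ^ 2 + N)) * exp (-w / 2) := by
    rw [hPe, integral_add i0 io, integral_gaussian, integral_eq_zero_of_odd, add_zero, hhalf,
      ← sqrt_mul (by positivity)]
    · congr 1; rw [hbdef]; field_simp
    · intro y; rw [neg_sq]; ring
  set f : ℝ → ℝ := fun y => exp (a * y - exp w * phase N y) with hf
  have hfc : Continuous f := by rw [hf]; unfold phase; fun_prop
  have hPc : Continuous P := by rw [hP]; fun_prop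
  have ib : Integrable fun y : ℝ => C / exp w * exp (-(exp w / 8) * y ^ 2) :=
    (integrable_exp_neg_mul_sq (by positivity)).const_mul _
  have ifP : Integrable fun y => f y - P y :=
    ib.mono' (hfc.sub hPc).aestronglyMeasurable (ae_of_all _ (hC _ hM1))
  have iF : Integrable f := by
    have := ifP.add iP
    refine this.congr (ae_of_all _ fun y => by simp)
  refine ⟨iF, ?_⟩
  rw [← hPint, ← integral_sub iF iP]
  refine (abs_integral_le_integral_abs).trans ((integral_mono ifP.abs ib (hC _ hM1)).trans
    (le_of_eq ?_))
  rw [integral_const_mul, integral_gaussian, hhalf, exp_neg, mul_assoc C,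
    ← sqrt_mul (by positivity)]
  rw [show π / (exp w / 8) = 8 * π * (1 / exp w) by field_simp]
  ring

/-! ### The induction step -/

/-- One multiplicative convolution with `e^{-t}` (written in the variables `w = log(𝗊)/n`)
turns the asymptotics for `n = N` into the asymptotics for `n = N + 1`. For `w ≥ 0` this is Laplace's
method; for `w ≤ 0` it follows from the crude bound `hB`. -/
lemma asymptotics_step {N : ℝ} (hN : 1 ≤ N) {G G' : ℝ → ℂ} {C K B : ℝ} (hC : 0 ≤ C) (hK : 0 ≤ K)
    (hm : StronglyMeasurable G)
    (hG : ∀ w : ℝ, ‖G w - ((C * exp (-((N - 1) * w / 2)) * exp (-(N * exp w)) : ℝ) : ℂ)‖ ≤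
      K * exp (-((N + 1) * w / 2)) * exp (-(N * exp w)))
    (hG' : ∀ w : ℝ, G' w = N * ∫ y : ℝ, ((exp (-exp (w + N * y)) : ℝ) : ℂ) * G (w - y))
    (hB0 : 0 ≤ B) (hB : ∀ w : ℝ, ‖G' w‖ ≤ B * exp (-((N + 1) * w / 2))) :
    ∃ K' : ℝ, 0 ≤ K' ∧ ∀ w : ℝ,
      ‖G' w - ((N * C * √(2 * π / (N ^ 2 + N)) * exp (-(N * w / 2)) *
          exp (-((N + 1) * exp w)) : ℝ) : ℂ)‖ ≤
        K' * exp (-((N + 2) * w / 2)) * exp (-((N + 1) * exp w)) := by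
  obtain ⟨K₁, hK₁, h₁⟩ := laplace hN ((N - 1) / 2)
  obtain ⟨K₂, hK₂, h₂⟩ := laplace hN ((N + 1) / 2)
  set R := √(2 * π / (N ^ 2 + N)) with hR
  have hR0 : 0 ≤ R := sqrt_nonneg _
  have hN0 : 0 < N := by linarith
  refine ⟨max (N * C * K₁ + N * K * (R + K₂)) ((B + N * C * R) * exp (N + 1)),
    le_max_of_le_left (by positivity), fun w => ?_⟩
  rcases le_total 0 w with hw | hw
  · obtain ⟨i₁, j₁⟩ := h₁ w hw
    obtain ⟨i₂, j₂⟩ := h₂ w hw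
    set c := exp (-((N - 1) * w / 2)) * exp (-((N + 1) * exp w)) with hc
    set d := exp (-((N + 1) * w / 2)) * exp (-((N + 1) * exp w)) with hd
    set J₁ := ∫ y : ℝ, exp ((N - 1) / 2 * y - exp w * phase N y) with hJ₁
    set J₂ := ∫ y : ℝ, exp ((N + 1) / 2 * y - exp w * phase N y) with hJ₂
    set h : ℝ → ℂ := fun y => ((exp (-exp (w + N * y)) : ℝ) : ℂ) * G (w - y) with hh
    set p : ℝ → ℝ := fun y => C * c * exp ((N - 1) / 2 * y - exp w * phase N y) with hp
    set e : ℝ → ℝ := fun y => K * d * exp ((N + 1) / 2 * y - exp w * phase N y) with he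
    have ip : Integrable p := i₁.const_mul _
    have ie : Integrable e := i₂.const_mul _
    have ipc : Integrable (fun y => ((p y : ℝ) : ℂ)) := ip.ofReal
    have hhm : AEStronglyMeasurable h volume := by
      refine AEStronglyMeasurable.mul (by fun_prop) ?_
      exact (hm.comp_measurable (by fun_prop : Measurable fun y : ℝ => w - y)).aestronglyMeasurable
    -- both exponents combine to `-(N + 1) e^w - e^w * phase N y`
    have hcomb : ∀ b y : ℝ, exp (-exp (w + N * y)) * (exp (-(b * (w - y) / 2)) *
        exp (-(N * exp (w - y)))) = exp (-(b * w / 2)) * exp (-((N + 1) * exp w)) *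
          exp (b / 2 * y - exp w * phase N y) := by
      intro b y
      simp only [← exp_add]
      congr 1
      rw [exp_add, sub_eq_add_neg w y, exp_add]
      unfold phase
      ring
    have hbound : ∀ y, ‖h y - p y‖ ≤ e y := by
      intro y
      have hy := hG (w - y)
      have e1 : h y - p y = ((exp (-exp (w + N * y)) : ℝ) : ℂ) * (G (w - y) -
          ((C * exp (-((N - 1) * (w - y) / 2)) * exp (-(N * exp (w - y))) : ℝ) : ℂ)) := by
        rw [mul_sub, ← Complex.ofReal_mul]
        rw [show exp (-exp (w + N * y)) * (C * exp (-((N - 1) * (w - y) / 2)) *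
          exp (-(N * exp (w - y)))) = p y by
            rw [hp, mul_assoc C, mul_left_comm, hcomb]; ring]
      rw [e1, norm_mul, Complex.norm_real, norm_of_nonneg (exp_pos _).le]
      refine (mul_le_mul_of_nonneg_left hy (exp_pos _).le).trans (le_of_eq ?_)
      rw [he, mul_assoc K, mul_left_comm, hcomb]; ring
    have idiff : Integrable fun y => h y - p y :=
      ie.mono' (hhm.sub ipc.aestronglyMeasurable) (ae_of_all _ hbound)
    have hsplit : ∫ y, h y = (∫ y, (h y - p y)) + ((C * c * J₁ : ℝ) : ℂ) := by
      have : ((C * c * J₁ : ℝ) : ℂ) = ∫ y, ((p y : ℝ) : ℂ) := by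
        rw [integral_complex_ofReal, hp, integral_const_mul]
      rw [this, ← integral_add idiff ipc]
      simp
    have hnorm : ‖∫ y, (h y - p y)‖ ≤ K * d * J₂ := by
      refine (norm_integral_le_integral_norm _).trans ((integral_mono idiff.norm ie hbound).trans
        (le_of_eq ?_))
      rw [he, integral_const_mul]
    have hw1 : exp (-w) ≤ 1 := exp_le_one_iff.2 (by linarith)
    have hJ₂le : J₂ ≤ (R + K₂) * exp (-w / 2) := by
      have := (abs_le.1 j₂).2
      have h3 : K₂ * exp (-w / 2) * exp (-w) ≤ K₂ * exp (-w / 2) :=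
        mul_le_of_le_one_right (by positivity) hw1
      linarith
    have hce : c * exp (-w / 2) = exp (-(N * w / 2)) * exp (-((N + 1) * exp w)) := by
      rw [hc]; simp only [← exp_add]; congr 1; ring
    have hde : d * exp (-w / 2) = exp (-((N + 2) * w / 2)) * exp (-((N + 1) * exp w)) := by
      rw [hd]; simp only [← exp_add]; congr 1; ring
    have hce' : c * (exp (-w / 2) * exp (-w)) = d * exp (-w / 2) := by
      rw [hc, hd]; simp only [← exp_add]; congr 1; ring
    have efin : G' w - ((N * C * R * exp (-(N * w / 2)) * exp (-((N + 1) * exp w)) : ℝ) : ℂ) =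
        N * (∫ y, (h y - p y)) + ((N * C * c * (J₁ - R * exp (-w / 2)) : ℝ) : ℂ) := by
      rw [hG' w, hsplit, show N * C * R * exp (-(N * w / 2)) * exp (-((N + 1) * exp w)) =
        N * C * R * (c * exp (-w / 2)) by rw [hce]; ring]
      push_cast
      ring
    have hc0 : 0 < c := by positivity
    have hd0 : 0 < d := by positivity
    rw [efin]
    calc _ ≤ N * (K * d * J₂) + N * C * c * (K₁ * exp (-w / 2) * exp (-w)) := by
          refine (norm_add_le _ _).trans ?_
          rw [norm_mul, Complex.norm_real, Complex.norm_real, norm_of_nonneg hN0.le, norm_mul,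
            norm_of_nonneg (by positivity : 0 ≤ N * C * c), norm_eq_abs]
          gcongr
      _ ≤ N * (K * d * ((R + K₂) * exp (-w / 2))) +
            N * C * c * (K₁ * exp (-w / 2) * exp (-w)) := by gcongr
      _ = N * (K * d * ((R + K₂) * exp (-w / 2))) +
            N * C * K₁ * (c * (exp (-w / 2) * exp (-w))) := by ring
      _ = (N * C * K₁ + N * K * (R + K₂)) * (d * exp (-w / 2)) := by rw [hce']; ring
      _ ≤ _ := by
          rw [hde, ← mul_assoc]; gcongr; exact le_max_left _ _
  · have hM : exp w ≤ 1 := exp_le_one_iff.2 hw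
    refine (norm_sub_le _ _).trans ?_
    rw [Complex.norm_real, norm_of_nonneg (by positivity)]
    have e1 : exp (-((N + 1) * w / 2)) ≤ exp (-((N + 2) * w / 2)) :=
      exp_le_exp.2 (by linarith)
    have e2 : exp (-(N * w / 2)) ≤ exp (-((N + 2) * w / 2)) := exp_le_exp.2 (by linarith)
    have e3 : exp (-((N + 1) * exp w)) ≤ 1 := exp_le_one_iff.2 (by
      have := exp_pos w
      simp only [Left.neg_nonpos_iff]; positivity)
    have e4 : 1 ≤ exp (N + 1) * exp (-((N + 1) * exp w)) := by
      rw [← exp_add]; exact one_le_exp (by nlinarith)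
    calc _ ≤ B * exp (-((N + 2) * w / 2)) + N * C * R * exp (-((N + 2) * w / 2)) * 1 := by
          gcongr
          exact (hB w).trans (by gcongr)
      _ = (B + N * C * R) * exp (-((N + 2) * w / 2)) * 1 := by ring
      _ ≤ (B + N * C * R) * exp (-((N + 2) * w / 2)) *
            (exp (N + 1) * exp (-((N + 1) * exp w))) := by gcongr
      _ = ((B + N * C * R) * exp (N + 1)) * exp (-((N + 2) * w / 2)) *
            exp (-((N + 1) * exp w)) := by ring
      _ ≤ _ := by gcongr; exact le_max_right _ _

/-! ### The Mellin–Barnes integral and its recursion -/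

/-- The Gamma function as a two-sided Laplace transform: Euler's integral after `t = e^u`. -/
lemma Gamma_eq_integral_exp {z : ℂ} (hz : 0 < z.re) :
    Integrable (fun u : ℝ => ((exp (-exp u) : ℝ) : ℂ) * Complex.exp (z * u)) ∧
    Complex.Gamma z = ∫ u : ℝ, ((exp (-exp u) : ℝ) : ℂ) * Complex.exp (z * u) := by
  have himg : exp '' Set.univ = Set.Ioi 0 := by rw [Set.image_univ, range_exp]
  have hder : ∀ x ∈ (Set.univ : Set ℝ), HasDerivWithinAt exp (exp x) Set.univ x :=
    fun x _ => (hasDerivAt_exp x).hasDerivWithinAt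
  have hconv := Complex.GammaIntegral_convergent hz
  have hpt : ∀ u : ℝ, |exp u| • (((exp (-exp u) : ℝ) : ℂ) * ((exp u : ℝ) : ℂ) ^ (z - 1)) =
      ((exp (-exp u) : ℝ) : ℂ) * Complex.exp (z * u) := by
    intro u
    have hne : ((exp u : ℝ) : ℂ) ≠ 0 := by exact_mod_cast (exp_pos u).ne'
    rw [abs_of_pos (exp_pos u), Complex.real_smul, Complex.cpow_sub _ _ hne, Complex.cpow_one,
      Complex.cpow_def_of_ne_zero hne, ← Complex.ofReal_log (exp_pos u).le, log_exp]
    rw [mul_comm z]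
    field_simp
  constructor
  · rw [← himg, integrableOn_image_iff_integrableOn_abs_deriv_smul MeasurableSet.univ hder
      exp_injective.injOn, integrableOn_univ] at hconv
    exact hconv.congr (ae_of_all _ hpt)
  · rw [Complex.Gamma_eq_integral hz, Complex.GammaIntegral, ← himg,
      integral_image_eq_integral_abs_deriv_smul MeasurableSet.univ hder exp_injective.injOn,
      setIntegral_univ]
    exact integral_congr_ae (ae_of_all _ hpt)

lemma integrable_exp_neg_exp {δ : ℝ} (hδ : 0 < δ) :
    Integrable (fun u : ℝ => exp (-exp u) * exp (δ * u)) := by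
  have h := (Gamma_eq_integral_exp (z := δ) (by simpa using hδ)).1.norm
  refine h.congr (ae_of_all _ fun u => ?_)
  simp [Complex.norm_exp, Complex.exp_ofReal_re]

lemma integral_exp_neg_exp {δ : ℝ} (hδ : 0 < δ) :
    ∫ u : ℝ, exp (-exp u) * exp (δ * u) = Real.Gamma δ := by
  have h := (Gamma_eq_integral_exp (z := δ) (by simpa using hδ)).2
  rw [Complex.Gamma_ofReal] at h
  have : ∀ u : ℝ, ((exp (-exp u) : ℝ) : ℂ) * Complex.exp (δ * u) =
      ((exp (-exp u) * exp (δ * u) : ℝ) : ℂ) := by intro u; push_cast; rfl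
  simp only [this, integral_complex_ofReal] at h
  exact_mod_cast h.symm

lemma norm_Gamma_le {z : ℂ} (hz : 0 < z.re) : ‖Complex.Gamma z‖ ≤ Real.Gamma z.re := by
  rw [(Gamma_eq_integral_exp hz).2, ← integral_exp_neg_exp hz]
  refine (norm_integral_le_integral_norm _).trans (le_of_eq ?_)
  refine integral_congr_ae (ae_of_all _ fun u => ?_)
  simp [Complex.norm_exp, Complex.exp_ofReal_re]

lemma continuous_Gamma_vertical {ε : ℝ} (hε : 0 < ε) :
    Continuous fun s : ℝ => Complex.Gamma ((ε : ℂ) + (s : ℂ) * Complex.I) := by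
  refine continuous_iff_continuousAt.2 fun s => ?_
  have : ContinuousAt Complex.Gamma ((ε : ℂ) + (s : ℂ) * Complex.I) := by
    refine (Complex.differentiableAt_Gamma _ fun m hm => ?_).continuousAt
    have := congrArg Complex.re hm
    simp at this
    have h2 : (0 : ℝ) ≤ m := m.cast_nonneg
    linarith
  exact this.comp (f := fun s : ℝ => (ε : ℂ) + (s : ℂ) * Complex.I) (by fun_prop)

/-- Quadratic decay on vertical lines, from `Γ(z) = Γ(z + 2) / (z (z + 1))`. -/
lemma norm_Gamma_vertical_le {ε : ℝ} (hε : 0 < ε) :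
    ∃ D : ℝ, 0 ≤ D ∧ ∀ s : ℝ,
      ‖Complex.Gamma ((ε : ℂ) + (s : ℂ) * Complex.I)‖ ≤ D * (1 + s ^ 2)⁻¹ := by
  set δ := min ε 1 with hδ
  have hδ0 : 0 < δ := lt_min hε one_pos
  have hδε : δ ≤ ε := min_le_left _ _
  have hδ1 : δ ≤ 1 := min_le_right _ _
  have hG : 0 < Real.Gamma (ε + 2) := Real.Gamma_pos_of_pos (by linarith)
  refine ⟨Real.Gamma (ε + 2) / δ ^ 2, by positivity, fun s => ?_⟩
  set z : ℂ := (ε : ℂ) + (s : ℂ) * Complex.I with hz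
  have hre : z.re = ε := by simp [hz]
  have him : z.im = s := by simp [hz]
  have hz0 : z ≠ 0 := fun h => by rw [h] at hre; simp at hre; linarith
  have hz1 : z + 1 ≠ 0 := fun h => by
    have := congrArg Complex.re h
    simp [hre] at this; linarith
  have h2 : Complex.Gamma (z + 1 + 1) = (z + 1) * (z * Complex.Gamma z) := by
    rw [Complex.Gamma_add_one _ hz1, Complex.Gamma_add_one _ hz0]
  have h3 : ‖Complex.Gamma (z + 1 + 1)‖ ≤ Real.Gamma (ε + 2) := by
    have hre2 : (z + 1 + 1).re = ε + 2 := by simp [hre]; ring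
    have := norm_Gamma_le (z := z + 1 + 1) (by rw [hre2]; linarith)
    rwa [hre2] at this
  rw [h2, norm_mul, norm_mul] at h3
  have h4 : δ ^ 2 * (1 + s ^ 2) ≤ ‖z + 1‖ * ‖z‖ := by
    refine abs_le_of_sq_le_sq' ?_ (by positivity) |>.2
    have n1 : ‖z‖ ^ 2 = ε ^ 2 + s ^ 2 := by
      rw [← Complex.normSq_eq_norm_sq, Complex.normSq_apply, hre, him]; ring
    have n2 : ‖z + 1‖ ^ 2 = (ε + 1) ^ 2 + s ^ 2 := by
      rw [← Complex.normSq_eq_norm_sq, Complex.normSq_apply]; simp [hre, him]; ring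
    rw [mul_pow, mul_pow, n1, n2]
    have a1 : δ ^ 2 * (1 + s ^ 2) ≤ ε ^ 2 + s ^ 2 := by
      have : δ ^ 2 ≤ ε ^ 2 := by gcongr
      have : δ ^ 2 ≤ 1 := pow_le_one₀ hδ0.le hδ1
      nlinarith [sq_nonneg s]
    have a2 : δ ^ 2 * (1 + s ^ 2) ≤ (ε + 1) ^ 2 + s ^ 2 := by nlinarith
    calc (δ ^ 2) ^ 2 * (1 + s ^ 2) ^ 2
        = (δ ^ 2 * (1 + s ^ 2)) * (δ ^ 2 * (1 + s ^ 2)) := by ring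
      _ ≤ _ := by gcongr
  rw [div_mul_eq_mul_div, ← div_eq_mul_inv, div_div, le_div_iff₀ (by positivity)]
  calc ‖Complex.Gamma z‖ * ((1 + s ^ 2) * δ ^ 2)
      = ‖Complex.Gamma z‖ * (δ ^ 2 * (1 + s ^ 2)) := by ring
    _ ≤ ‖Complex.Gamma z‖ * (‖z + 1‖ * ‖z‖) := by gcongr
    _ = ‖z + 1‖ * (‖z‖ * ‖Complex.Gamma z‖) := by ring
    _ ≤ _ := h3

lemma integrable_Gamma_pow {ε : ℝ} (hε : 0 < ε) {n : ℕ} (hn : 1 ≤ n) :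
    Integrable fun s : ℝ => Complex.Gamma ((ε : ℂ) + (s : ℂ) * Complex.I) ^ n := by
  obtain ⟨D, hD, h⟩ := norm_Gamma_vertical_le hε
  refine (integrable_inv_one_add_sq.const_mul (D ^ n)).mono'
    ((continuous_Gamma_vertical hε).pow n).aestronglyMeasurable (ae_of_all _ fun s => ?_)
  have h1 : (1 + s ^ 2)⁻¹ ≤ 1 := inv_le_one_of_one_le₀ (by nlinarith [sq_nonneg s])
  rw [norm_pow]
  refine (pow_le_pow_left₀ (norm_nonneg _) (h s) n).trans ?_
  rw [mul_pow]
  gcongr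
  exact pow_le_of_le_one (by positivity) h1 (by omega)

/-- The Mellin–Barnes integral as a function of `x = log 𝗊`. -/
noncomputable def mellinBarnes (ε : ℝ) (n : ℕ) (x : ℝ) : ℂ :=
  (1 / (2 * (π : ℂ))) * ∫ s : ℝ, Complex.Gamma ((ε : ℂ) + (s : ℂ) * Complex.I) ^ n *
    Complex.exp (-((ε : ℂ) + (s : ℂ) * Complex.I) * (x : ℂ))

lemma stronglyMeasurable_mellinBarnes {ε : ℝ} (hε : 0 < ε) (n : ℕ) :
    StronglyMeasurable (mellinBarnes ε n) := by
  unfold mellinBarnes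
  refine StronglyMeasurable.const_mul ?_ _
  refine StronglyMeasurable.integral_prod_right (f := fun (x s : ℝ) =>
    Complex.Gamma ((ε : ℂ) + (s : ℂ) * Complex.I) ^ n *
    Complex.exp (-((ε : ℂ) + (s : ℂ) * Complex.I) * (x : ℂ))) ?_
  refine Continuous.stronglyMeasurable ?_
  exact (((continuous_Gamma_vertical hε).comp continuous_snd).pow n).mul (by fun_prop)

/-- Mellin inversion for `e^{-t}`. -/
lemma mellinBarnes_one {ε : ℝ} (hε : 0 < ε) (x : ℝ) :
    mellinBarnes ε 1 x = ((exp (-exp x) : ℝ) : ℂ) := by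
  have hmel : ∀ s : ℝ, mellin (fun t : ℝ => ((exp (-t) : ℝ) : ℂ)) (ε + s * Complex.I) =
      Complex.Gamma (ε + s * Complex.I) := by
    intro s
    rw [← Complex.GammaIntegral_eq_mellin, Complex.Gamma_eq_integral (by simpa using hε)]
  have h := mellinInv_mellin_eq ε (fun t : ℝ => ((exp (-t) : ℝ) : ℂ)) (exp_pos x) ?_ ?_ ?_
  · rw [← h, mellinInv, mellinBarnes]
    rw [Complex.real_smul]
    congr 1
    · push_cast; rfl
    · refine integral_congr_ae (ae_of_all _ fun s => ?_)
      have hne : ((exp x : ℝ) : ℂ) ≠ 0 := by exact_mod_cast (exp_pos x).ne'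
      simp only [hmel, smul_eq_mul, pow_one]
      rw [Complex.cpow_def_of_ne_zero hne, ← Complex.ofReal_log (exp_pos x).le, log_exp,
        mul_comm, mul_comm (x : ℂ)]
  · have := Complex.GammaIntegral_convergent (s := ε) (by simpa using hε)
    refine this.congr_fun (fun t _ => ?_) measurableSet_Ioi
    simp only [smul_eq_mul]; rw [mul_comm]
  · have := integrable_Gamma_pow hε le_rfl
    refine this.congr (ae_of_all _ fun s => ?_)
    simp only [hmel, pow_one]
  · fun_prop

/-- `Γⁿ⁺¹ = Γⁿ · Γ` becomes an additive convolution in the variable `x = log 𝗊` (Fubini). -/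
lemma mellinBarnes_succ {ε : ℝ} (hε : 0 < ε) {n : ℕ} (hn : 1 ≤ n) (x : ℝ) :
    mellinBarnes ε (n + 1) x =
      ∫ u : ℝ, ((exp (-exp u) : ℝ) : ℂ) * mellinBarnes ε n (x - u) := by
  set f : ℝ → ℝ → ℂ := fun s u =>
    (Complex.Gamma ((ε : ℂ) + (s : ℂ) * Complex.I) ^ n *
      Complex.exp (-((ε : ℂ) + (s : ℂ) * Complex.I) * (x : ℂ))) *
    (((exp (-exp u) : ℝ) : ℂ) * Complex.exp (((ε : ℂ) + (s : ℂ) * Complex.I) * u)) with hf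
  have hint : Integrable (Function.uncurry f) (volume.prod volume) := by
    have h1 := (((integrable_Gamma_pow hε hn).norm).mul_const (exp (-(ε * x)))).mul_prod
      (integrable_exp_neg_exp hε)
    refine h1.mono' ?_ (ae_of_all _ fun p => le_of_eq ?_)
    · refine Continuous.aestronglyMeasurable ?_
      exact ((((continuous_Gamma_vertical hε).comp continuous_fst).pow n).mul (by fun_prop)).mul
        (by fun_prop)
    · simp [Function.uncurry, hf, Complex.norm_exp, Complex.exp_ofReal_re]
  have hswap := integral_integral_swap hint
  have hl : ∀ s : ℝ, ∫ u : ℝ, f s u =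
      Complex.Gamma ((ε : ℂ) + (s : ℂ) * Complex.I) ^ (n + 1) *
        Complex.exp (-((ε : ℂ) + (s : ℂ) * Complex.I) * (x : ℂ)) := by
    intro s
    simp only [hf]
    rw [integral_const_mul, ← (Gamma_eq_integral_exp (by simpa using hε)).2]
    ring
  have hr : ∀ u : ℝ, (1 / (2 * (π : ℂ))) * ∫ s : ℝ, f s u =
      ((exp (-exp u) : ℝ) : ℂ) * mellinBarnes ε n (x - u) := by
    intro u
    rw [mellinBarnes, mul_left_comm]
    congr 1
    rw [← integral_const_mul]
    refine integral_congr_ae (ae_of_all _ fun s => ?_)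
    simp only [hf]
    rw [show -((ε : ℂ) + (s : ℂ) * Complex.I) * ((x - u : ℝ) : ℂ) =
      -((ε : ℂ) + (s : ℂ) * Complex.I) * (x : ℂ) + ((ε : ℂ) + (s : ℂ) * Complex.I) * u by
        push_cast; ring, Complex.exp_add]
    ring
  simp only [← hr]
  rw [integral_const_mul, ← hswap, mellinBarnes]
  simp only [hl]

/-- A bound valid for all `x`, obtained from the convolution recursion; it is used for `x ≤ 0`. The
exponent `-x / 2` does not depend on `ε`. -/
lemma norm_mellinBarnes_le {ε : ℝ} (hε : 0 < ε) {n : ℕ} (hn : 1 ≤ n) :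
    ∃ B : ℝ, 0 ≤ B ∧ ∀ x : ℝ, ‖mellinBarnes ε n x‖ ≤ B * exp (-x / 2) := by
  induction n, hn using Nat.le_induction with
  | base =>
    refine ⟨1, zero_le_one, fun x => ?_⟩
    rw [mellinBarnes_one hε, Complex.norm_real, norm_of_nonneg (exp_pos _).le, one_mul]
    apply exp_le_exp.2
    have h1 := add_one_le_exp x
    have h2 := exp_pos x
    rcases le_total 0 x with h | h <;> linarith
  | succ n hn ih =>
    obtain ⟨B, hB, h⟩ := ih
    have hi := (integrable_exp_neg_exp (δ := 1 / 2) (by norm_num)).const_mul B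
    refine ⟨∫ u : ℝ, B * (exp (-exp u) * exp (1 / 2 * u)), integral_nonneg fun u => by positivity,
      fun x => ?_⟩
    rw [mellinBarnes_succ hε hn, ← integral_mul_const]
    refine norm_integral_le_of_norm_le (hi.mul_const _) (ae_of_all _ fun u => ?_)
    rw [norm_mul, Complex.norm_real, norm_of_nonneg (exp_pos _).le]
    refine (mul_le_mul_of_nonneg_left (h (x - u)) (exp_pos _).le).trans (le_of_eq ?_)
    rw [show -(x - u) / 2 = 1 / 2 * u + -x / 2 by ring, exp_add]
    ring

/-- The convolution recursion in the rescaled variable `w = x / n`. -/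
lemma mellinBarnes_succ_rescaled {ε : ℝ} (hε : 0 < ε) {n : ℕ} (hn : 1 ≤ n) (w : ℝ) :
    mellinBarnes ε (n + 1) (((n + 1 : ℕ) : ℝ) * w) = ((n : ℝ) : ℂ) *
      ∫ y : ℝ, ((exp (-exp (w + n * y)) : ℝ) : ℂ) * mellinBarnes ε n (n * (w - y)) := by
  have hn0 : (0 : ℝ) < n := by exact_mod_cast hn
  rw [mellinBarnes_succ hε hn]
  set g : ℝ → ℂ := fun u => ((exp (-exp u) : ℝ) : ℂ) *
    mellinBarnes ε n (((n + 1 : ℕ) : ℝ) * w - u) with hg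
  have h1 := Measure.integral_comp_mul_left (fun u => g (w + u)) (n : ℝ)
  rw [integral_add_left_eq_self g w, abs_of_pos (inv_pos.2 hn0), Complex.real_smul] at h1
  have h2 : ∀ y : ℝ, ((exp (-exp (w + n * y)) : ℝ) : ℂ) * mellinBarnes ε n (n * (w - y)) =
      g (w + n * y) := by
    intro y
    simp only [hg]
    congr 2
    push_cast
    ring
  simp only [h2]
  rw [h1]
  have : ((n : ℝ) : ℂ) ≠ 0 := by exact_mod_cast hn0.ne'
  push_cast at this ⊢
  field_simp

/-! ### Asymptotics -/

/-- The asymptotics of the Mellin–Barnes integral, with a relative error `O(e^{-w})` that is uniform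
over all real `w = log(𝗊)/n`. -/
lemma mellinBarnes_asymptotics {ε : ℝ} (hε : 0 < ε) {n : ℕ} (hn : 1 ≤ n) :
    ∃ K : ℝ, 0 ≤ K ∧ ∀ w : ℝ,
      ‖mellinBarnes ε n (n * w) - (((2 * π) ^ (((n : ℝ) - 1) / 2) / √n *
          exp (-(((n : ℝ) - 1) * w / 2)) * exp (-(n * exp w)) : ℝ) : ℂ)‖ ≤
        K * exp (-(((n : ℝ) + 1) * w / 2)) * exp (-(n * exp w)) := by
  induction n, hn using Nat.le_induction with
  | base =>
    refine ⟨0, le_rfl, fun w => ?_⟩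
    rw [mellinBarnes_one hε]
    simp
  | succ n hn ih =>
    obtain ⟨K, hK, h⟩ := ih
    obtain ⟨B, hB0, hB⟩ := norm_mellinBarnes_le hε (Nat.le_succ_of_le hn)
    have hN : (1 : ℝ) ≤ n := by exact_mod_cast hn
    obtain ⟨K', hK', h'⟩ := asymptotics_step hN (G := fun w => mellinBarnes ε n (n * w))
      (G' := fun w => mellinBarnes ε (n + 1) (((n + 1 : ℕ) : ℝ) * w))
      (C := (2 * π) ^ (((n : ℝ) - 1) / 2) / √n) (B := B) (by positivity) hK
      ((stronglyMeasurable_mellinBarnes hε n).comp_measurable (by fun_prop)) h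
      (mellinBarnes_succ_rescaled hε hn) hB0 (fun w => by
        refine (hB _).trans (le_of_eq ?_)
        congr 2; push_cast; ring)
    refine ⟨K', hK', fun w => ?_⟩
    have hconst : n * ((2 * π) ^ (((n : ℝ) - 1) / 2) / √n) * √(2 * π / ((n : ℝ) ^ 2 + n)) =
        (2 * π) ^ ((((n + 1 : ℕ) : ℝ) - 1) / 2) / √((n + 1 : ℕ) : ℝ) := by
      have hn0 : (0 : ℝ) < n := by linarith
      have h2π : 0 < 2 * π := by positivity
      have e1 : (2 * π) ^ ((((n + 1 : ℕ) : ℝ) - 1) / 2) =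
          (2 * π) ^ (((n : ℝ) - 1) / 2) * √(2 * π) := by
        rw [sqrt_eq_rpow, ← rpow_add h2π]; congr 1; push_cast; ring
      have e2 : √(2 * π / ((n : ℝ) ^ 2 + n)) = √(2 * π) / (√n * √((n + 1 : ℕ) : ℝ)) := by
        rw [sqrt_div h2π.le, ← sqrt_mul hn0.le]; congr 2; push_cast; ring
      rw [e1, e2]
      have s1 : 0 < √(n : ℝ) := sqrt_pos.2 hn0
      have s2 : 0 < √((n + 1 : ℕ) : ℝ) := sqrt_pos.2 (by positivity)
      have s3 : √(n : ℝ) ^ 2 = n := sq_sqrt hn0.le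
      field_simp
      rw [s3]
    have h3 := h' w
    rw [hconst] at h3
    convert h3 using 2
    · push_cast; ring_nf
    · push_cast; ring_nf
    · push_cast; ring_nf

end QuantumVolume

/-- Asymptotics of the quantum volume of `ℙ^{n−1}` as `𝗊 → +∞`: the Mellin–Barnes
integral `F(𝗊) = (1/2π)∫_ℝ Γ(ε+is)ⁿ 𝗊^{−(ε+is)} ds` satisfies
`F(𝗊) = ((2π)^{(n−1)/2}/(√n·𝗊^{(n−1)/(2n)})) e^{−n𝗊^{1/n}} (1 + O(𝗊^{−1/n}))`. -/
theorem quantum_volume_asymptotics_at_infty (n : ℕ) (hn : 1 ≤ n) (ε : ℝ) (hε : 0 < ε)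
    (F : ℝ → ℂ)
    (hF : ∀ q : ℝ, F q = (1 / (2 * (π : ℂ))) *
        ∫ s : ℝ, Complex.Gamma ((ε : ℂ) + (s : ℂ) * Complex.I) ^ n *
          Complex.exp (-((ε : ℂ) + (s : ℂ) * Complex.I) * (Real.log q : ℂ))) :
    (fun q : ℝ => F q *
        ((Real.sqrt n * q ^ (((n : ℝ) - 1) / (2 * n)) * Real.exp (n * q ^ ((n : ℝ)⁻¹)) *
          (2 * π) ^ (-(((n : ℝ) - 1) / 2)) : ℝ) : ℂ) - 1)
      =O[atTop] fun q : ℝ => q ^ (-(n : ℝ)⁻¹) := by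
  obtain ⟨K, hK, h⟩ := QuantumVolume.mellinBarnes_asymptotics hε hn
  have hn0 : (0 : ℝ) < n := by exact_mod_cast hn
  refine IsBigO.of_bound (K * (√n * (2 * π) ^ (-(((n : ℝ) - 1) / 2)))) ?_
  filter_upwards [eventually_gt_atTop 0] with q hq
  set w := log q / n with hw
  have hlog : log q = n * w := by rw [hw]; field_simp
  have hFq : F q = QuantumVolume.mellinBarnes ε n (n * w) := by
    rw [hF, ← hlog]; rfl
  have hpow : ∀ a : ℝ, q ^ a = exp (n * w * a) := by
    intro a; rw [rpow_def_of_pos hq, hlog]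
  have hh := h w
  rw [← hFq] at hh
  set c := (2 * π) ^ (((n : ℝ) - 1) / 2) with hc
  have hc0 : 0 < c := by positivity
  have hcinv : (2 * π) ^ (-(((n : ℝ) - 1) / 2)) = c⁻¹ := rpow_neg (by positivity) _
  have s1 : 0 < √(n : ℝ) := sqrt_pos.2 hn0
  have e1 : q ^ (((n : ℝ) - 1) / (2 * n)) = exp (((n : ℝ) - 1) * w / 2) := by
    rw [hpow]; congr 1; field_simp
  have e2 : q ^ ((n : ℝ)⁻¹) = exp w := by
    rw [hpow]; congr 1; field_simp
  have e3 : q ^ (-(n : ℝ)⁻¹) = exp (-w) := by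
    rw [hpow]; congr 1; field_simp
  rw [e1, e2, e3, hcinv]
  set T := √(n : ℝ) * exp (((n : ℝ) - 1) * w / 2) * exp (n * exp w) * c⁻¹ with hT
  have hT0 : 0 < T := by positivity
  have hmain : (c / √n * exp (-(((n : ℝ) - 1) * w / 2)) * exp (-(n * exp w))) * T = 1 := by
    rw [hT, exp_neg, exp_neg]; field_simp
  have herr : K * exp (-(((n : ℝ) + 1) * w / 2)) * exp (-(n * exp w)) * T =
      K * (√n * c⁻¹) * exp (-w) := by
    rw [show -w = -(((n : ℝ) + 1) * w / 2) + ((n : ℝ) - 1) * w / 2 by ring, exp_add, hT,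
      exp_neg (n * exp w)]
    field_simp
  rw [← Complex.ofReal_one, ← hmain, Complex.ofReal_mul _ T, ← sub_mul, norm_mul,
    Complex.norm_real, norm_of_nonneg hT0.le, norm_of_nonneg (exp_pos _).le, ← herr]
  exact mul_le_mul_of_nonneg_right hh hT0.le
end

section
/- Fix an integer n ≥ 1 and a real ε > 0, and define F : (0,∞) → ℂ by F(𝗊) = (1/(2π)) ∫_{−∞}^{∞} Γ(ε+is)^n · exp(−(ε+is)·log 𝗊) ds. Then F is n times continuously differentiable on (0,∞), and letting θ denote the operator sending a function g to 𝗊 ↦ 𝗊·g′(𝗊), the n-fold iterate satisfies (θⁿF)(𝗊) = (−1)ⁿ · 𝗊 · F(𝗊) for all 𝗊 > 0. -/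
/-!
On the half-plane `Re z > 0` the functional equation gives
`|z|ᵏ |Γ(z)| ≤ |z(z+1)⋯(z+k−1) Γ(z)| = |Γ(z+k)| ≤ Γ(Re z + k)`, and the right-hand side is bounded
on closed vertical strips. Hence, for `n ≥ 1`, `Γ(z)ⁿ zᵐ = O(1/(1 + (Im z)²))` uniformly on such
strips, for every `m`: no form of Stirling's formula is needed.

This decay justifies, in the variable `x = log 𝗊` in which `θ = d/dx`, differentiating
`∫ Γ(z)ⁿ e^{−zx}` under the integral sign arbitrarily often, each derivative producing a factor
`−z`. After `n` derivatives the integrand is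
`(−z)ⁿ Γ(z)ⁿ e^{−zx} = (−1)ⁿ eˣ Γ(z+1)ⁿ e^{−(z+1)x}`, and Cauchy's theorem on the rectangles
`[ε, ε+1] × [−T, T]` (whose horizontal sides contribute nothing in the limit `T → ∞`) moves the
line `Re z = ε + 1` back to `Re z = ε`.
-/

open MeasureTheory Real

open Filter Topology Set

/-- The Mellin–Barnes integrand `Γ(z)ⁿ (−z)ᵐ e^{−zx}`, in the logarithmic variable `x = log 𝗊`. -/
noncomputable def mbKernel (n m : ℕ) (x : ℝ) (z : ℂ) : ℂ :=
  Complex.Gamma z ^ n * (-z) ^ m * Complex.exp (-z * (x : ℂ))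

/-- The integral of `mbKernel` along the line `Re z = a`, parametrised by `z = a + is`
(so without the factor `i` coming from `dz`). -/
noncomputable def mbIntegral (n m : ℕ) (a x : ℝ) : ℂ :=
  ∫ s : ℝ, mbKernel n m x ((a : ℂ) + (s : ℂ) * Complex.I)

lemma norm_Gamma_le_Gamma_re {z : ℂ} (hz : 0 < z.re) : ‖Complex.Gamma z‖ ≤ Real.Gamma z.re := by
  rw [Complex.Gamma_eq_integral hz, Real.Gamma_eq_integral hz, Complex.GammaIntegral]
  refine (norm_integral_le_integral_norm _).trans (le_of_eq ?_)
  refine setIntegral_congr_fun measurableSet_Ioi fun x hx => ?_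
  simp only [norm_mul]
  rw [Complex.norm_of_nonneg (Real.exp_pos _).le, Complex.norm_cpow_eq_rpow_re_of_pos hx]
  simp

lemma norm_pow_mul_norm_Gamma_le (k : ℕ) {z : ℂ} (hz : 0 < z.re) :
    ‖z‖ ^ k * ‖Complex.Gamma z‖ ≤ ‖Complex.Gamma (z + k)‖ := by
  induction k with
  | zero => simp
  | succ k ih =>
    have hre : 0 < (z + k).re := by simp; positivity
    have h0 : z + k ≠ 0 := fun h => by simp [h] at hre
    have hle : ‖z‖ ≤ ‖z + k‖ := by
      rw [← sq_le_sq₀ (norm_nonneg _) (norm_nonneg _), Complex.sq_norm, Complex.sq_norm,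
        Complex.normSq_apply, Complex.normSq_apply]
      simp only [Complex.add_re, Complex.natCast_re, Complex.add_im, Complex.natCast_im, add_zero]
      have : (0 : ℝ) ≤ k := Nat.cast_nonneg k
      nlinarith
    rw [Nat.cast_succ, ← add_assoc, Complex.Gamma_add_one _ h0, norm_mul, pow_succ]
    calc ‖z‖ ^ k * ‖z‖ * ‖Complex.Gamma z‖ = ‖z‖ * (‖z‖ ^ k * ‖Complex.Gamma z‖) := by ring
      _ ≤ _ := mul_le_mul hle ih (by positivity) (norm_nonneg _)

/-- On a vertical strip in the right half-plane, `Γ` decays faster than any power of `z`. -/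
lemma exists_norm_pow_mul_norm_Gamma_le {ε : ℝ} (hε : 0 < ε) (k : ℕ) :
    ∃ C : ℝ, ∀ z : ℂ, z.re ∈ Icc ε (ε + 1) → ‖z‖ ^ k * ‖Complex.Gamma z‖ ≤ C := by
  have hcont : ContinuousOn (fun a : ℝ => Real.Gamma (a + k)) (Icc ε (ε + 1)) := by
    refine Real.differentiableOn_Gamma_Ioi.continuousOn.comp (by fun_prop) fun a ha => ?_
    have : (0 : ℝ) ≤ k := Nat.cast_nonneg k
    simp only [mem_Ioi]
    linarith [ha.1]
  obtain ⟨C, hC⟩ := isCompact_Icc.bddAbove_image hcont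
  refine ⟨C, fun z hz => ?_⟩
  have hz0 : 0 < z.re := hε.trans_le hz.1
  have hre : 0 < (z + k).re := by simp; positivity
  refine (norm_pow_mul_norm_Gamma_le k hz0).trans ((norm_Gamma_le_Gamma_re hre).trans ?_)
  simpa using hC (mem_image_of_mem _ hz)

lemma exists_norm_Gamma_pow_mul_pow_le {n : ℕ} (hn : 1 ≤ n) (m : ℕ) {ε : ℝ} (hε : 0 < ε) :
    ∃ C : ℝ, 0 ≤ C ∧ ∀ z : ℂ, z.re ∈ Icc ε (ε + 1) →
      ‖Complex.Gamma z ^ n * (-z) ^ m‖ ≤ C * (1 + z.im ^ 2)⁻¹ := by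
  obtain ⟨A, hA⟩ := exists_norm_pow_mul_norm_Gamma_le hε 0
  obtain ⟨B, hB⟩ := exists_norm_pow_mul_norm_Gamma_le hε m
  obtain ⟨D, hD⟩ := exists_norm_pow_mul_norm_Gamma_le hε (m + 2)
  have hmem : ((ε : ℂ)).re ∈ Icc ε (ε + 1) := by simp
  have hA0 : 0 ≤ A := le_trans (by positivity) (hA _ hmem)
  have hB0 : 0 ≤ B := le_trans (by positivity) (hB _ hmem)
  have hD0 : 0 ≤ D := le_trans (by positivity) (hD _ hmem)
  refine ⟨A ^ (n - 1) * (B + D), by positivity, fun z hz => ?_⟩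
  obtain ⟨k, rfl⟩ : ∃ k, n = k + 1 := ⟨n - 1, by omega⟩
  have h1 : ‖Complex.Gamma z‖ ≤ A := by simpa using hA z hz
  have him : z.im ^ 2 ≤ ‖z‖ ^ 2 := by
    rw [← sq_abs]
    exact pow_le_pow_left₀ (abs_nonneg _) (Complex.abs_im_le_norm z) 2
  rw [← div_eq_mul_inv, le_div_iff₀ (by positivity), norm_mul, norm_pow, norm_pow, norm_neg]
  calc ‖Complex.Gamma z‖ ^ (k + 1) * ‖z‖ ^ m * (1 + z.im ^ 2)
      ≤ ‖Complex.Gamma z‖ ^ (k + 1) * ‖z‖ ^ m * (1 + ‖z‖ ^ 2) := by gcongr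
    _ = ‖Complex.Gamma z‖ ^ k * (‖z‖ ^ m * ‖Complex.Gamma z‖
          + ‖z‖ ^ (m + 2) * ‖Complex.Gamma z‖) := by ring
    _ ≤ A ^ k * (B + D) := by
        gcongr
        exacts [hB z hz, hD z hz]

/-- The decay of the integrand on the strip `ε ≤ Re z ≤ ε + 1`, locally uniformly in `x`. -/
lemma exists_norm_mbKernel_le {n : ℕ} (hn : 1 ≤ n) (m : ℕ) {ε : ℝ} (hε : 0 < ε) (R : ℝ) :
    ∃ C : ℝ, ∀ x : ℝ, |x| ≤ R → ∀ z : ℂ, z.re ∈ Icc ε (ε + 1) →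
      ‖mbKernel n m x z‖ ≤ C * (1 + z.im ^ 2)⁻¹ := by
  obtain ⟨C, hC0, hC⟩ := exists_norm_Gamma_pow_mul_pow_le hn m hε
  refine ⟨C * Real.exp ((ε + 1) * R), fun x hx z hz => ?_⟩
  have hexp : ‖Complex.exp (-z * (x : ℂ))‖ ≤ Real.exp ((ε + 1) * R) := by
    rw [Complex.norm_exp, Real.exp_le_exp]
    have h1 : (-z * (x : ℂ)).re = z.re * (-x) := by simp
    rw [h1]
    calc z.re * (-x) ≤ z.re * |x| :=
          mul_le_mul_of_nonneg_left (neg_le_abs x) (hε.le.trans hz.1)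
      _ ≤ (ε + 1) * R :=
          mul_le_mul hz.2 hx (abs_nonneg x) (by linarith)
  rw [mbKernel, norm_mul]
  calc _ ≤ C * (1 + z.im ^ 2)⁻¹ * Real.exp ((ε + 1) * R) :=
        mul_le_mul (hC z hz) hexp (norm_nonneg _) (by positivity)
    _ = _ := by ring

lemma differentiableAt_mbKernel (n m : ℕ) (x : ℝ) {z : ℂ} (hz : 0 < z.re) :
    DifferentiableAt ℂ (mbKernel n m x) z := by
  have hG : DifferentiableAt ℂ Complex.Gamma z := by
    refine Complex.differentiableAt_Gamma z fun k hk => ?_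
    rw [hk] at hz
    have : (0 : ℝ) ≤ k := Nat.cast_nonneg k
    simp at hz
    linarith
  unfold mbKernel
  fun_prop

lemma continuous_mbKernel_line (n m : ℕ) {a : ℝ} (ha : 0 < a) (x : ℝ) :
    Continuous fun s : ℝ => mbKernel n m x ((a : ℂ) + (s : ℂ) * Complex.I) := by
  rw [continuous_iff_continuousAt]
  intro s
  have h : ContinuousAt (mbKernel n m x) ((a : ℂ) + (s : ℂ) * Complex.I) :=
    (differentiableAt_mbKernel n m x (by simpa using ha)).continuousAt
  exact ContinuousAt.comp (f := fun s : ℝ => (a : ℂ) + (s : ℂ) * Complex.I) h (by fun_prop)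

lemma integrable_mbKernel_line {n : ℕ} (hn : 1 ≤ n) (m : ℕ) {a : ℝ} (ha : 0 < a) (x : ℝ) :
    Integrable fun s : ℝ => mbKernel n m x ((a : ℂ) + (s : ℂ) * Complex.I) := by
  obtain ⟨C, hC⟩ := exists_norm_mbKernel_le hn m ha |x|
  refine (integrable_inv_one_add_sq.const_mul C).mono'
    (continuous_mbKernel_line n m ha x).aestronglyMeasurable (Eventually.of_forall fun s => ?_)
  simpa using hC x le_rfl ((a : ℂ) + (s : ℂ) * Complex.I) (by simp)

lemma hasDerivAt_mbIntegral {n : ℕ} (hn : 1 ≤ n) (m : ℕ) {a : ℝ} (ha : 0 < a) (x₀ : ℝ) :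
    HasDerivAt (mbIntegral n m a) (mbIntegral n (m + 1) a x₀) x₀ := by
  obtain ⟨C, hC⟩ := exists_norm_mbKernel_le hn (m + 1) ha (|x₀| + 1)
  refine (hasDerivAt_integral_of_dominated_loc_of_deriv_le
    (F := fun x s => mbKernel n m x ((a : ℂ) + (s : ℂ) * Complex.I))
    (F' := fun x s => mbKernel n (m + 1) x ((a : ℂ) + (s : ℂ) * Complex.I))
    (bound := fun s : ℝ => C * (1 + s ^ 2)⁻¹) (Metric.ball_mem_nhds x₀ one_pos)
    (Eventually.of_forall fun x => (continuous_mbKernel_line n m ha x).aestronglyMeasurable)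
    (integrable_mbKernel_line hn m ha x₀)
    (continuous_mbKernel_line n (m + 1) ha x₀).aestronglyMeasurable
    (Eventually.of_forall fun s x hx => ?_)
    (integrable_inv_one_add_sq.const_mul C) (Eventually.of_forall fun s x _ => ?_)).2
  · have hx' : |x| ≤ |x₀| + 1 := by
      rw [Metric.mem_ball, Real.dist_eq] at hx
      linarith [abs_sub_abs_le_abs_sub x x₀]
    simpa using hC x hx' ((a : ℂ) + (s : ℂ) * Complex.I) (by simp)
  · generalize (a : ℂ) + (s : ℂ) * Complex.I = z
    have h := (((Complex.ofRealCLM.hasDerivAt (x := x)).const_mul (-z)).cexp).const_mul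
      (Complex.Gamma z ^ n * (-z) ^ m)
    refine h.congr_deriv ?_
    simp [mbKernel]
    ring

lemma contDiff_mbIntegral {n : ℕ} (hn : 1 ≤ n) {a : ℝ} (ha : 0 < a) (k m : ℕ) :
    ContDiff ℝ k (mbIntegral n m a) := by
  induction k generalizing m with
  | zero =>
    exact contDiff_zero.2 (continuous_iff_continuousAt.2 fun x =>
      (hasDerivAt_mbIntegral hn m ha x).continuousAt)
  | succ k ih =>
    rw [Nat.cast_succ, contDiff_succ_iff_deriv]
    refine ⟨fun x => (hasDerivAt_mbIntegral hn m ha x).differentiableAt, by simp, ?_⟩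
    rw [show deriv (mbIntegral n m a) = mbIntegral n (m + 1) a from
      funext fun x => (hasDerivAt_mbIntegral hn m ha x).deriv]
    exact ih (m + 1)

/-- Shifting the contour from `Re z = ε + 1` to `Re z = ε`. -/
lemma mbIntegral_add_one {n : ℕ} (hn : 1 ≤ n) (m : ℕ) {ε : ℝ} (hε : 0 < ε) (x : ℝ) :
    mbIntegral n m (ε + 1) x = mbIntegral n m ε x := by
  obtain ⟨C, hC⟩ := exists_norm_mbKernel_le hn m hε |x|
  have hε1 : ε ≤ ε + 1 := by linarith
  -- `H T` is the integral over the horizontal segment at height `T`.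
  let H : ℝ → ℂ := fun T => ∫ a : ℝ in ε..(ε + 1), mbKernel n m x ((a : ℂ) + (T : ℂ) * Complex.I)
  have hHle : ∀ T, ‖H T‖ ≤ C * (1 + T ^ 2)⁻¹ := by
    intro T
    have := intervalIntegral.norm_integral_le_of_norm_le_const (a := ε) (b := ε + 1)
      (f := fun a : ℝ => mbKernel n m x ((a : ℂ) + (T : ℂ) * Complex.I))
      (C := C * (1 + T ^ 2)⁻¹) (fun a ha => by
        rw [uIoc_of_le hε1] at ha
        simpa using hC x le_rfl ((a : ℂ) + (T : ℂ) * Complex.I) (by simpa using ⟨ha.1.le, ha.2⟩))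
    simpa using this
  have hlim : Tendsto (fun T : ℝ => C * (1 + T ^ 2)⁻¹) atTop (𝓝 0) := by
    have : Tendsto (fun T : ℝ => 1 + T ^ 2) atTop atTop :=
      tendsto_atTop_add_const_left _ _ (tendsto_pow_atTop two_ne_zero)
    simpa using (tendsto_inv_atTop_zero.comp this).const_mul C
  have hHtop : Tendsto H atTop (𝓝 0) := squeeze_zero_norm hHle hlim
  have hHbot : Tendsto (fun T => H (-T)) atTop (𝓝 0) :=
    squeeze_zero_norm (fun T => by simpa using hHle (-T)) hlim
  let V : ℝ → ℝ → ℂ := fun a T =>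
    ∫ s : ℝ in (-T)..T, mbKernel n m x ((a : ℂ) + (s : ℂ) * Complex.I)
  have hV : ∀ a, 0 < a → Tendsto (V a) atTop (𝓝 (mbIntegral n m a x)) := fun a ha =>
    intervalIntegral_tendsto_integral (integrable_mbKernel_line hn m ha x)
      tendsto_neg_atTop_atBot tendsto_id
  have hrect : ∀ T, H (-T) - H T + Complex.I * V (ε + 1) T - Complex.I * V ε T = 0 := by
    intro T
    have := Complex.integral_boundary_rect_eq_zero_of_differentiableOn (mbKernel n m x)
      (⟨ε, -T⟩ : ℂ) (⟨ε + 1, T⟩ : ℂ) (fun z hz => by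
        have hz1 := (Complex.mem_reProdIm.1 hz).1
        simp only [uIcc_of_le hε1] at hz1
        exact (differentiableAt_mbKernel n m x (hε.trans_le hz1.1)).differentiableWithinAt)
    simpa [H, V] using this
  have h0 := ((hHbot.sub hHtop).add ((hV (ε + 1) (by linarith)).const_mul Complex.I)).sub
    ((hV ε hε).const_mul Complex.I)
  simp only [hrect] at h0
  have h1 := tendsto_nhds_unique h0 tendsto_const_nhds
  have h2 : Complex.I * (mbIntegral n m (ε + 1) x - mbIntegral n m ε x) = 0 := by
    linear_combination h1
  exact sub_eq_zero.1 ((mul_eq_zero.1 h2).resolve_left Complex.I_ne_zero)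

/-- The quantum differential equation in the variable `x = log 𝗊`. -/
lemma mbIntegral_self {n : ℕ} (hn : 1 ≤ n) {ε : ℝ} (hε : 0 < ε) (x : ℝ) :
    mbIntegral n n ε x = (-1) ^ n * Complex.exp x * mbIntegral n 0 ε x := by
  rw [← mbIntegral_add_one hn 0 hε, mbIntegral, mbIntegral, ← integral_const_mul]
  congr 1
  ext s
  have hz : (ε : ℂ) + (s : ℂ) * Complex.I ≠ 0 := fun h => by
    have := congrArg Complex.re h
    simp at this
    exact hε.ne' this
  rw [show ((ε + 1 : ℝ) : ℂ) + (s : ℂ) * Complex.I = ((ε : ℂ) + (s : ℂ) * Complex.I) + 1 by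
    push_cast; ring]
  generalize (ε : ℂ) + (s : ℂ) * Complex.I = z at hz
  have he : Complex.exp (-z * x) = Complex.exp x * Complex.exp (-(z + 1) * x) := by
    rw [← Complex.exp_add]
    congr 1
    ring
  rw [mbKernel, mbKernel, Complex.Gamma_add_one _ hz, he, neg_pow, mul_pow]
  ring

/-- The quantum differential equation of `ℙ^{n−1}` for the Mellin–Barnes integral
`F(𝗊) = (1/2π)∫_ℝ Γ(ε+is)ⁿ 𝗊^{−(ε+is)} ds`: `F` is `n` times continuously
differentiable on `(0,∞)` and, with `θ = 𝗊 d/d𝗊`, satisfies `θⁿF = (−1)ⁿ 𝗊 F`. -/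
theorem quantum_differential_equation_Pn (n : ℕ) (hn : 1 ≤ n) (ε : ℝ) (hε : 0 < ε)
    (F : ℝ → ℂ)
    (hF : ∀ q : ℝ, F q = (1 / (2 * (π : ℂ))) *
        ∫ s : ℝ, Complex.Gamma ((ε : ℂ) + (s : ℂ) * Complex.I) ^ n *
          Complex.exp (-((ε : ℂ) + (s : ℂ) * Complex.I) * (Real.log q : ℂ)))
    (θ : (ℝ → ℂ) → (ℝ → ℂ)) (hθ : ∀ g : ℝ → ℂ, ∀ q : ℝ, θ g q = q * deriv g q) :
    ContDiffOn ℝ n F (Set.Ioi 0)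
    ∧ ∀ q : ℝ, 0 < q → (θ^[n] F) q = (-1) ^ n * (q : ℂ) * F q := by
  have hF' : ∀ q, F q = (1 / (2 * (π : ℂ))) * mbIntegral n 0 ε (Real.log q) := fun q => by
    simp [hF q, mbIntegral, mbKernel]
  refine ⟨?_, fun q hq => ?_⟩
  · rw [show F = fun q => (1 / (2 * (π : ℂ))) * mbIntegral n 0 ε (Real.log q) from funext hF']
    exact contDiffOn_const.mul ((contDiff_mbIntegral hn hε n 0).comp_contDiffOn
      (Real.contDiffOn_log.mono fun q hq => ne_of_gt hq))
  · have hiter : ∀ m : ℕ, ∀ q : ℝ, 0 < q →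
        (θ^[m] F) q = (1 / (2 * (π : ℂ))) * mbIntegral n m ε (Real.log q) := by
      intro m
      induction m with
      | zero => exact fun q _ => hF' q
      | succ m ih =>
        intro q hq
        have hd : HasDerivAt (fun q => (1 / (2 * (π : ℂ))) * mbIntegral n m ε (Real.log q))
            ((1 / (2 * (π : ℂ))) * (q⁻¹ • mbIntegral n (m + 1) ε (Real.log q))) q :=
          ((hasDerivAt_mbIntegral hn m hε (Real.log q)).scomp q
            (Real.hasDerivAt_log hq.ne')).const_mul _
        have heq : θ^[m] F =ᶠ[𝓝 q]
            fun q => (1 / (2 * (π : ℂ))) * mbIntegral n m ε (Real.log q) := by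
          filter_upwards [Ioi_mem_nhds hq] with y hy using ih y hy
        have hq0 : (q : ℂ) ≠ 0 := Complex.ofReal_ne_zero.2 hq.ne'
        rw [Function.iterate_succ_apply', hθ, heq.deriv_eq, hd.deriv, Complex.real_smul,
          Complex.ofReal_inv]
        field_simp
    rw [hiter n q hq, mbIntegral_self hn hε, hF' q, ← Complex.ofReal_exp, Real.exp_log hq]
    ring
end
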